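/- Let (X,d) be a metric space and I a coarse interval structure on (X,d), i.e. a map [·,·] : X×X → P(X) for which there exist κ₀ ≥ 0 and non-decreasing functions φ, ψ such that: (I1)' the Hausdorff distance d_H([a,a],{a}) ≤ κ₀ and d_H([a,b],[b,a]) ≤ κ₀ for all a,b; (I2)' c ∈ N_R([a,b]) implies [a,c] ⊆ N_{φ(R)}([a,b]); (I3)' N_{κ₀}([a,b]) ∩ N_{κ₀}([b,c]) ∩ N_{κ₀}([c,a]) ≠ ∅ for all a,b,c, and diam(N_R([a,b]) ∩ N_R([b,c]) ∩ N_R([c,a])) ≤ ψ(R) for all R ≥ κ₀. Then there exists another coarse interval structure I' = [·,·]' on (X,d), uniformly close to I (i.e. sup_{x,y} d_H([x,y],[x,y]') < ∞), which satisfies the stronger axioms: (I1) [a,a]' = {a} and [a,b]' = [b,a]' for all a,b; (I2) with some non-decreasing φ'; and (I3) [a,b]' ∩ [b,c]' ∩ [c,a]' ≠ ∅ for all a,b,c and diam(N_R([a,b]') ∩ N_R([b,c]') ∩ N_R([c,a]')) ≤ ψ'(R) for some non-decreasing ψ' and all R ≥ 0. -/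

import Mathlib

/-- The closed `R`-neighbourhood of a set `A`. -/
def cmNbhd {X : Type*} [MetricSpace X] (R : ℝ) (A : Set X) : Set X :=
  {x | ∃ a ∈ A, dist x a ≤ R}

/-- A coarse interval structure on `(X,d)` with parameters `(κ₀, φ, ψ)`,
satisfying the relaxed axioms (I1)', (I2)', (I3)'.  Here `d_H(A,B) ≤ κ₀` is
rendered as mutual containment in closed `κ₀`-neighbourhoods. -/
structure IsCoarseIntervalStructure {X : Type*} [MetricSpace X]
    (I : X → X → Set X) (κ₀ : ℝ) (φ ψ : ℝ → ℝ) : Prop where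
  κ₀_nonneg : 0 ≤ κ₀
  I1'a : ∀ a : X, I a a ⊆ cmNbhd κ₀ {a} ∧ ({a} : Set X) ⊆ cmNbhd κ₀ (I a a)
  I1'b : ∀ a b : X, I a b ⊆ cmNbhd κ₀ (I b a) ∧ I b a ⊆ cmNbhd κ₀ (I a b)
  φ_mono : Monotone φ
  I2' : ∀ (R : ℝ) (a b c : X), c ∈ cmNbhd R (I a b) →
    I a c ⊆ cmNbhd (φ R) (I a b)
  ψ_mono : Monotone ψ
  I3'ne : ∀ a b c : X,
    (cmNbhd κ₀ (I a b) ∩ cmNbhd κ₀ (I b c) ∩ cmNbhd κ₀ (I c a)).Nonempty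
  I3'diam : ∀ (R : ℝ), κ₀ ≤ R → ∀ (a b c x y : X),
    x ∈ cmNbhd R (I a b) ∩ cmNbhd R (I b c) ∩ cmNbhd R (I c a) →
    y ∈ cmNbhd R (I a b) ∩ cmNbhd R (I b c) ∩ cmNbhd R (I c a) →
    dist x y ≤ ψ R

/-!
Replace `[a, b]` by the union of the `3κ₀`-neighbourhoods of `[a, b]` and `[b, a]` off the diagonal,
and by `{a}` on it. The union makes the intervals symmetric, and the thickening makes the coarse
centers of a triple genuine common points. For triples with a repetition the common point has to be
an endpoint, whence the constant `3κ₀`: a coarse center `p` of `(a, a, b)` is `2κ₀`-close to `a`,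
through `[a, a]`, and `κ₀`-close to `[a, b]`. The axioms (I2) and (I3) about `R`-neighbourhoods pass
to any uniformly close map, with `R` shifted by the distance.
-/

section Neighbourhoods

variable {X : Type*} [MetricSpace X] {R S : ℝ} {A B : Set X}

theorem subset_cmNbhd (hR : 0 ≤ R) : A ⊆ cmNbhd R A :=
  fun x hx => ⟨x, hx, (dist_self x).trans_le hR⟩

theorem cmNbhd_mono (h : R ≤ S) : cmNbhd R A ⊆ cmNbhd S A :=
  fun _ ⟨a, ha, hxa⟩ => ⟨a, ha, hxa.trans h⟩

theorem cmNbhd_subset_cmNbhd_add (h : A ⊆ cmNbhd S B) : cmNbhd R A ⊆ cmNbhd (R + S) B := by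
  rintro x ⟨a, ha, hxa⟩
  obtain ⟨b, hb, hab⟩ := h ha
  exact ⟨b, hb, (dist_triangle x a b).trans (add_le_add hxa hab)⟩

end Neighbourhoods

/-- Two interval maps are uniformly close with constant `C`: corresponding intervals are at
Hausdorff distance at most `C`, rendered as mutual containment in closed `C`-neighbourhoods. -/
def UniformlyClose {X : Type*} [MetricSpace X] (C : ℝ) (I J : X → X → Set X) : Prop :=
  ∀ a b, I a b ⊆ cmNbhd C (J a b) ∧ J a b ⊆ cmNbhd C (I a b)

open Classical in
/-- The interval map obtained from `I` by joining the `r`-neighbourhoods of `I a b` and `I b a`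
when `a ≠ b` and by collapsing `I a a` to the point `a`; it is the strict interval structure
replacing `I` once `r` is large enough. -/
noncomputable def strictInterval {X : Type*} [MetricSpace X] (I : X → X → Set X) (r : ℝ)
    (a b : X) : Set X :=
  if a = b then {a} else cmNbhd r (I a b) ∪ cmNbhd r (I b a)

section StrictInterval

variable {X : Type*} [MetricSpace X] (I : X → X → Set X) (r : ℝ)

@[simp]
theorem strictInterval_self (a : X) : strictInterval I r a a = {a} :=
  if_pos rfl

theorem strictInterval_of_ne {a b : X} (h : a ≠ b) :
    strictInterval I r a b = cmNbhd r (I a b) ∪ cmNbhd r (I b a) :=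
  if_neg h

theorem strictInterval_comm (a b : X) : strictInterval I r a b = strictInterval I r b a := by
  rcases eq_or_ne a b with rfl | h
  · rfl
  · rw [strictInterval_of_ne I r h, strictInterval_of_ne I r h.symm, Set.union_comm]

theorem cmNbhd_subset_strictInterval {a b : X} (h : a ≠ b) :
    cmNbhd r (I a b) ⊆ strictInterval I r a b := by
  rw [strictInterval_of_ne I r h]
  exact Set.subset_union_left

end StrictInterval

namespace IsCoarseIntervalStructure

variable {X : Type*} [MetricSpace X] {I J : X → X → Set X} {κ₀ C R r : ℝ} {φ ψ : ℝ → ℝ}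

theorem subset_cmNbhd_of_uniformlyClose (hI : IsCoarseIntervalStructure I κ₀ φ ψ)
    (hIJ : UniformlyClose C I J) {a b c : X} (hc : c ∈ cmNbhd R (J a b)) :
    J a c ⊆ cmNbhd (C + φ (R + C) + C) (J a b) := by
  have hIc : I a c ⊆ cmNbhd (φ (R + C)) (I a b) :=
    hI.I2' _ a b c (cmNbhd_subset_cmNbhd_add (hIJ a b).2 hc)
  calc J a c ⊆ cmNbhd C (I a c) := (hIJ a c).2
    _ ⊆ cmNbhd (C + φ (R + C)) (I a b) := cmNbhd_subset_cmNbhd_add hIc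
    _ ⊆ cmNbhd (C + φ (R + C) + C) (J a b) := cmNbhd_subset_cmNbhd_add (hIJ a b).1

theorem dist_le_of_uniformlyClose (hI : IsCoarseIntervalStructure I κ₀ φ ψ)
    (hIJ : UniformlyClose C I J) (hR : κ₀ ≤ R + C) {a b c x y : X}
    (hx : x ∈ cmNbhd R (J a b) ∩ cmNbhd R (J b c) ∩ cmNbhd R (J c a))
    (hy : y ∈ cmNbhd R (J a b) ∩ cmNbhd R (J b c) ∩ cmNbhd R (J c a)) :
    dist x y ≤ ψ (R + C) := by
  have hsub (u v : X) : cmNbhd R (J u v) ⊆ cmNbhd (R + C) (I u v) :=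
    cmNbhd_subset_cmNbhd_add (hIJ u v).2
  have hcenters := Set.inter_subset_inter (Set.inter_subset_inter (hsub a b) (hsub b c)) (hsub c a)
  exact hI.I3'diam (R + C) hR a b c x y (hcenters hx) (hcenters hy)

theorem left_mem_cmNbhd (hI : IsCoarseIntervalStructure I κ₀ φ ψ) (a b : X) :
    a ∈ cmNbhd (3 * κ₀) (I a b) := by
  obtain ⟨p, ⟨hp, q, hq, hpq⟩, -⟩ := hI.I3'ne a a b
  have hpa : dist p a ≤ κ₀ + κ₀ := by
    simpa only [cmNbhd, Set.mem_singleton_iff, exists_eq_left, Set.mem_ofPred_eq]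
      using cmNbhd_subset_cmNbhd_add (hI.I1'a a).1 hp
  refine ⟨q, hq, ?_⟩
  calc dist a q ≤ dist p a + dist p q := dist_triangle_left a q p
    _ ≤ 3 * κ₀ := by linarith

theorem uniformlyClose_strictInterval (hI : IsCoarseIntervalStructure I κ₀ φ ψ) (hr : 0 ≤ r) :
    UniformlyClose (r + κ₀) I (strictInterval I r) := by
  have hκ : κ₀ ≤ r + κ₀ := le_add_of_nonneg_left hr
  intro a b
  rcases eq_or_ne a b with rfl | hab
  · rw [strictInterval_self]
    exact ⟨(hI.I1'a a).1.trans (cmNbhd_mono hκ), (hI.I1'a a).2.trans (cmNbhd_mono hκ)⟩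
  · constructor
    · calc I a b ⊆ cmNbhd r (I a b) := subset_cmNbhd hr
        _ ⊆ strictInterval I r a b := cmNbhd_subset_strictInterval I r hab
        _ ⊆ cmNbhd (r + κ₀) (strictInterval I r a b) :=
          subset_cmNbhd (hI.κ₀_nonneg.trans hκ)
    · rw [strictInterval_of_ne I r hab]
      exact Set.union_subset (cmNbhd_mono (le_add_of_nonneg_right hI.κ₀_nonneg))
        (cmNbhd_subset_cmNbhd_add (hI.I1'b a b).2)

theorem left_mem_strictInterval (hI : IsCoarseIntervalStructure I κ₀ φ ψ) (hr : 3 * κ₀ ≤ r)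
    (a b : X) : a ∈ strictInterval I r a b := by
  rcases eq_or_ne a b with rfl | hab
  · simp
  · exact cmNbhd_subset_strictInterval I r hab (cmNbhd_mono hr (hI.left_mem_cmNbhd a b))

theorem right_mem_strictInterval (hI : IsCoarseIntervalStructure I κ₀ φ ψ) (hr : 3 * κ₀ ≤ r)
    (a b : X) : b ∈ strictInterval I r a b :=
  strictInterval_comm I r b a ▸ hI.left_mem_strictInterval hr b a

theorem strictInterval_inter_nonempty (hI : IsCoarseIntervalStructure I κ₀ φ ψ)
    (hr : 3 * κ₀ ≤ r) (a b c : X) :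
    (strictInterval I r a b ∩ strictInterval I r b c ∩ strictInterval I r c a).Nonempty := by
  have left := hI.left_mem_strictInterval hr
  have right := hI.right_mem_strictInterval hr
  rcases eq_or_ne a b with rfl | hab
  · exact ⟨a, ⟨left a a, left a c⟩, right c a⟩
  rcases eq_or_ne b c with rfl | hbc
  · exact ⟨b, ⟨right a b, left b b⟩, left b a⟩
  rcases eq_or_ne c a with rfl | hca
  · exact ⟨c, ⟨left c b, right b c⟩, left c c⟩
  have hsub {u v : X} (huv : u ≠ v) : cmNbhd κ₀ (I u v) ⊆ strictInterval I r u v :=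
    (cmNbhd_mono (by linarith [hI.κ₀_nonneg])).trans (cmNbhd_subset_strictInterval I r huv)
  exact (hI.I3'ne a b c).mono
    (Set.inter_subset_inter (Set.inter_subset_inter (hsub hab) (hsub hbc)) (hsub hca))

end IsCoarseIntervalStructure

/-- every coarse interval structure on a metric space is uniformly
close to a coarse interval structure satisfying the stronger axioms
(I1)–(I3). -/
theorem stmt7 {X : Type*} [MetricSpace X] (I : X → X → Set X)
    (κ₀ : ℝ) (φ ψ : ℝ → ℝ) (hI : IsCoarseIntervalStructure I κ₀ φ ψ) :
    ∃ I' : X → X → Set X,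
      -- `I'` is uniformly close to `I`:
      (∃ C : ℝ, 0 ≤ C ∧ ∀ x y : X,
        I x y ⊆ cmNbhd C (I' x y) ∧ I' x y ⊆ cmNbhd C (I x y)) ∧
      -- (I1):
      (∀ a : X, I' a a = {a}) ∧
      (∀ a b : X, I' a b = I' b a) ∧
      -- (I2):
      (∃ φ' : ℝ → ℝ, Monotone φ' ∧ ∀ (R : ℝ) (a b c : X),
        c ∈ cmNbhd R (I' a b) → I' a c ⊆ cmNbhd (φ' R) (I' a b)) ∧
      -- (I3):
      (∀ a b c : X, (I' a b ∩ I' b c ∩ I' c a).Nonempty) ∧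
      (∃ ψ' : ℝ → ℝ, Monotone ψ' ∧ ∀ (R : ℝ), 0 ≤ R → ∀ (a b c x y : X),
        x ∈ cmNbhd R (I' a b) ∩ cmNbhd R (I' b c) ∩ cmNbhd R (I' c a) →
        y ∈ cmNbhd R (I' a b) ∩ cmNbhd R (I' b c) ∩ cmNbhd R (I' c a) →
        dist x y ≤ ψ' R) := by
  have hκ₀ : 0 ≤ κ₀ := hI.κ₀_nonneg
  have hr : 0 ≤ 3 * κ₀ := by positivity
  let C := 3 * κ₀ + κ₀
  have hC : κ₀ ≤ C := le_add_of_nonneg_left hr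
  have hclose : UniformlyClose C I (strictInterval I (3 * κ₀)) :=
    hI.uniformlyClose_strictInterval hr
  have hshift : Monotone fun R : ℝ => R + C := monotone_id.add_const C
  refine ⟨strictInterval I (3 * κ₀), ⟨C, hκ₀.trans hC, hclose⟩,
    strictInterval_self I (3 * κ₀), strictInterval_comm I (3 * κ₀),
    ⟨fun R => C + φ (R + C) + C, ((hI.φ_mono.comp hshift).const_add C).add_const C, ?_⟩,
    hI.strictInterval_inter_nonempty le_rfl,
    ⟨fun R => ψ (R + C), hI.ψ_mono.comp hshift, ?_⟩⟩
  · intro R a b c hc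
    exact hI.subset_cmNbhd_of_uniformlyClose hclose hc
  · intro R hR a b c x y hx hy
    exact hI.dist_le_of_uniformlyClose hclose (le_add_of_nonneg_of_le hR hC) hx hy
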